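/- arXiv:2206.15028 — 2 statements merged into one kernel-verified Lean document; each statement's English description precedes it below -/
import Mathlib

section
/- Let X be a partly regular coherent configuration on Ω and X' a coherent configuration on Ω with X' ≥ X. Then X' = X if and only if F(X') = F(X), i.e., X and X' have the same fibers. -/
open Set

universe u

/-- A coherent configuration on a finite set `Ω`: a partition `S` of `Ω × Ω`
satisfying (C1) the diagonal is a union of classes, (C2) closure under converse,
(C3) well-defined intersection numbers. -/
structure CohCfg (Ω : Type u) : Type u where
  S : Set (Set (Ω × Ω))
  finite : Finite Ω
  cover : ∀ p : Ω × Ω, ∃ s ∈ S, p ∈ s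
  disj : ∀ s ∈ S, ∀ t ∈ S, s ≠ t → s ∩ t = ∅
  nonemp : ∀ s ∈ S, s.Nonempty
  diag : ∀ s ∈ S, (∃ p ∈ s, p.1 = p.2) → ∀ p ∈ s, p.1 = p.2
  conv : ∀ s ∈ S, {p : Ω × Ω | (p.2, p.1) ∈ s} ∈ S
  inum : ∀ r ∈ S, ∀ s ∈ S, ∀ t ∈ S, ∀ p ∈ t, ∀ q ∈ t,
    {γ : Ω | (p.1, γ) ∈ r ∧ (γ, p.2) ∈ s}.ncard =
    {γ : Ω | (q.1, γ) ∈ r ∧ (γ, q.2) ∈ s}.ncard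

namespace CohCfg

variable {Ω Ω' : Type u}

/-- The intersection number `c^t_{rs}` computed at the pair `p`. -/
noncomputable def cnum (r s : Set (Ω × Ω)) (p : Ω × Ω) : ℕ :=
  {γ : Ω | (p.1, γ) ∈ r ∧ (γ, p.2) ∈ s}.ncard

/-- `X` is a scheme (homogeneous) if the full diagonal is a basis relation. -/
def IsScheme (X : CohCfg Ω) : Prop := {p : Ω × Ω | p.1 = p.2} ∈ X.S

/-- Commutativity: `c^t_{rs} = c^t_{sr}`. -/
def IsCommutative (X : CohCfg Ω) : Prop :=
  ∀ r ∈ X.S, ∀ s ∈ X.S, ∀ p : Ω × Ω, cnum r s p = cnum s r p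

/-- `s` is a relation of `X`, i.e. a union of basis relations. -/
def IsRelationOf (X : CohCfg Ω) (s : Set (Ω × Ω)) : Prop :=
  ∀ t ∈ X.S, (t ∩ s).Nonempty → t ⊆ s

/-- `X ≤ Y`: every (basis) relation of `X` is a relation of `Y`. -/
def le (X Y : CohCfg Ω) : Prop := ∀ s ∈ X.S, IsRelationOf Y s

/-- The diagonal relation `1_Δ` of a subset `Δ`. -/
def diagRel (Δ : Set Ω) : Set (Ω × Ω) := {p | p.1 = p.2 ∧ p.1 ∈ Δ}

/-- `Δ` is a fiber of `X`. -/
def IsFiber (X : CohCfg Ω) (Δ : Set Ω) : Prop := diagRel Δ ∈ X.S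

/-- `αs = {β | (α,β) ∈ s}`. -/
def pointSet (s : Set (Ω × Ω)) (α : Ω) : Set Ω := {β | (α, β) ∈ s}

/-- `X` is partly regular: some point `α` has `|αs| ≤ 1` for all basis relations. -/
def PartlyRegular (X : CohCfg Ω) : Prop :=
  ∃ α : Ω, ∀ s ∈ X.S, (pointSet s α).ncard ≤ 1

/-- The image `s^f` of a relation under a map of points. -/
def relImage (f : Ω → Ω') (s : Set (Ω × Ω)) : Set (Ω' × Ω') :=
  (fun p : Ω × Ω => (f p.1, f p.2)) '' s

/-- `φ` is an algebraic isomorphism from `X` to `X'`. -/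
structure IsAlgIso (X : CohCfg Ω) (X' : CohCfg Ω')
    (φ : Set (Ω × Ω) → Set (Ω' × Ω')) : Prop where
  bijOn : Set.BijOn φ X.S X'.S
  cnum_eq : ∀ r ∈ X.S, ∀ s ∈ X.S, ∀ t ∈ X.S, ∀ p ∈ t, ∀ q ∈ φ t,
    cnum r s p = cnum (φ r) (φ s) q

/-- The natural extension of an algebraic isomorphism to unions of basis relations. -/
def algImage (X : CohCfg Ω) (φ : Set (Ω × Ω) → Set (Ω' × Ω')) (s : Set (Ω × Ω)) :
    Set (Ω' × Ω') := ⋃₀ (φ '' {t | t ∈ X.S ∧ t ⊆ s})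

/-- The image `Δ^φ` of a fiber under an algebraic isomorphism. -/
def fiberImage (X : CohCfg Ω) (φ : Set (Ω × Ω) → Set (Ω' × Ω')) (Δ : Set Ω) : Set Ω' :=
  {α' | (α', α') ∈ φ (diagRel Δ)}

/-- `Y` is the point extension `X_α`: the smallest coherent configuration `≥ X`
having `1_α` as a basis relation. -/
def IsPointExt (X : CohCfg Ω) (α : Ω) (Y : CohCfg Ω) : Prop :=
  le X Y ∧ ({(α, α)} : Set (Ω × Ω)) ∈ Y.S ∧
    ∀ Z : CohCfg Ω, le X Z → ({(α, α)} : Set (Ω × Ω)) ∈ Z.S → le Y Z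

/-- `φ` has an `(α,α')`-extension: an algebraic isomorphism `X_α → X'_{α'}`
extending `φ` and sending `1_α` to `1_{α'}`. -/
def HasExtension (X : CohCfg Ω) (X' : CohCfg Ω') (φ : Set (Ω × Ω) → Set (Ω' × Ω'))
    (α : Ω) (α' : Ω') : Prop :=
  ∃ (Y : CohCfg Ω) (Y' : CohCfg Ω') (ψ : Set (Ω × Ω) → Set (Ω' × Ω')),
    IsPointExt X α Y ∧ IsPointExt X' α' Y' ∧ IsAlgIso Y Y' ψ ∧
    (∀ s ∈ X.S, algImage Y ψ s = φ s) ∧ ψ {(α, α)} = {(α', α')}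

/-- A sesquiclosed algebraic isomorphism: has an `(α,α')`-extension for all
`α ∈ Δ ∈ F(X)` and `α' ∈ Δ^φ`. -/
def SesquiclosedIso (X : CohCfg Ω) (X' : CohCfg Ω')
    (φ : Set (Ω × Ω) → Set (Ω' × Ω')) : Prop :=
  IsAlgIso X X' φ ∧
  ∀ Δ : Set Ω, IsFiber X Δ → ∀ α ∈ Δ, ∀ α' ∈ fiberImage X φ Δ, HasExtension X X' φ α α'

/-- `φ` is induced by the combinatorial isomorphism `f`. -/
def InducedBy (X : CohCfg Ω) (X' : CohCfg Ω') (φ : Set (Ω × Ω) → Set (Ω' × Ω'))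
    (f : Ω → Ω') : Prop :=
  Function.Bijective f ∧ ∀ s ∈ X.S, φ s = relImage f s

/-- `X` is separable: every algebraic isomorphism from `X` is induced by an isomorphism. -/
def Separable (X : CohCfg Ω) : Prop :=
  ∀ (Ω'' : Type u) (X' : CohCfg Ω'') (φ : Set (Ω × Ω) → Set (Ω'' × Ω'')),
    IsAlgIso X X' φ → ∃ f : Ω → Ω'', InducedBy X X' φ f

/-- `X` is sesquiseparable: every sesquiclosed algebraic isomorphism from `X`
is induced by an isomorphism. -/
def Sesquiseparable (X : CohCfg Ω) : Prop :=
  ∀ (Ω'' : Type u) (X' : CohCfg Ω'') (φ : Set (Ω × Ω) → Set (Ω'' × Ω'')),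
    SesquiclosedIso X X' φ → ∃ f : Ω → Ω'', InducedBy X X' φ f

/-- A sesquiclosed coherent configuration: (S1) the fibers of every one-point
extension `X_α` are the nonempty sets `αs`, and (S2) the identity algebraic
automorphism is sesquiclosed. -/
def SesquiclosedCfg (X : CohCfg Ω) : Prop :=
  (∀ α : Ω, ∀ Y : CohCfg Ω, IsPointExt X α Y →
     ∀ Δ : Set Ω, (IsFiber Y Δ ↔ ∃ s ∈ X.S, Δ = pointSet s α ∧ Δ.Nonempty)) ∧
  SesquiclosedIso X X id

/-- A parabolic of `X`: a relation that is an equivalence relation on `Ω`. -/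
def IsParabolic (X : CohCfg Ω) (e : Set (Ω × Ω)) : Prop :=
  IsRelationOf X e ∧ (∀ a : Ω, (a, a) ∈ e) ∧ (∀ p ∈ e, (p.2, p.1) ∈ e) ∧
    ∀ a b c : Ω, (a, b) ∈ e → (b, c) ∈ e → (a, c) ∈ e

/-- The class of `a` modulo the equivalence relation `e`. -/
def eClass (e : Set (Ω × Ω)) (a : Ω) : Set Ω := {b | (a, b) ∈ e}

/-- `Δ/e` is a section of `X`: `e` is a parabolic and `Δ` is a class of a
parabolic containing `e`. -/
def IsSection (X : CohCfg Ω) (Δ : Set Ω) (e : Set (Ω × Ω)) : Prop :=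
  IsParabolic X e ∧ ∃ d : Set (Ω × Ω), IsParabolic X d ∧ e ⊆ d ∧ ∃ a : Ω, Δ = eClass d a

/-- The point set of the section `Δ/e`: the `e`-classes of points of `Δ`. -/
abbrev Sec (Δ : Set Ω) (e : Set (Ω × Ω)) : Type u :=
  {Γ : Set Ω // ∃ a ∈ Δ, Γ = eClass e a}

/-- The relation `s_𝔖` on the section `𝔖 = Δ/e`. -/
def secRel (Δ : Set Ω) (e : Set (Ω × Ω)) (s : Set (Ω × Ω)) :
    Set (Sec Δ e × Sec Δ e) :=
  {p | ∃ a ∈ p.1.1, ∃ b ∈ p.2.1, (a, b) ∈ s}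

/-- `Y` is the coherent configuration `X_𝔖` on the section `𝔖 = Δ/e`. -/
def IsSectionCfg (X : CohCfg Ω) (Δ : Set Ω) (e : Set (Ω × Ω))
    (Y : CohCfg (Sec Δ e)) : Prop :=
  Y.S = {t | ∃ s ∈ X.S, t = secRel Δ e s ∧ t.Nonempty}

/-- The restriction `s_Δ` of a relation to a subset `Δ`. -/
def restRel (Δ : Set Ω) (s : Set (Ω × Ω)) : Set (↥Δ × ↥Δ) := {p | (p.1.1, p.2.1) ∈ s}

/-- `Y` is the restriction `X_Δ` of `X` to `Δ`. -/
def IsRestrictionCfg (X : CohCfg Ω) (Δ : Set Ω) (Y : CohCfg ↥Δ) : Prop :=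
  Y.S = {t | ∃ s ∈ X.S, t = restRel Δ s ∧ t.Nonempty}

/-- `Iso(X, X', φ)`: isomorphisms inducing the algebraic isomorphism `φ`. -/
def IsoSet (X : CohCfg Ω) (X' : CohCfg Ω') (φ : Set (Ω × Ω) → Set (Ω' × Ω')) :
    Set (Ω → Ω') :=
  {f | Function.Bijective f ∧ ∀ s ∈ X.S, relImage f s = φ s}

/-- `X` is schurian: its basis relations are the orbits of `Aut(X)` on `Ω × Ω`. -/
def Schurian (X : CohCfg Ω) : Prop :=
  ∀ s ∈ X.S, ∀ p ∈ s, ∀ q ∈ s, ∃ f : Ω → Ω,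
    (Function.Bijective f ∧ ∀ t ∈ X.S, relImage f t = t) ∧ (f p.1, f p.2) = q

/-- `e ⊆ rad(s)`: `s` is a union of products of pairs of `e`-classes it meets. -/
def RadGE (e s : Set (Ω × Ω)) : Prop :=
  ∀ p ∈ s, ∀ a b : Ω, (p.1, a) ∈ e → (p.2, b) ∈ e → (a, b) ∈ s

/-- The `e₁/e₀`-condition: every basis relation disjoint from `e₁` has `e₀` in
its radical. -/
def WedgeCond (X : CohCfg Ω) (e0 e1 : Set (Ω × Ω)) : Prop :=
  ∀ s ∈ X.S, s ∩ e1 = ∅ → RadGE e0 s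

/-- A circulant coherent configuration on a group `G`: right translations are
automorphisms. -/
def IsCirculant {G : Type u} [Group G] (X : CohCfg G) : Prop :=
  ∀ g : G, ∀ s ∈ X.S, relImage (fun x => x * g) s = s

/-- The equivalence relation `e(H)` whose classes are the cosets of `H`. -/
def eRelSet {G : Type u} [Group G] (H : Subgroup G) : Set (G × G) :=
  {p | p.1⁻¹ * p.2 ∈ H}

/-- `H` is an `X`-group. -/
def IsXGroup {G : Type u} [Group G] (X : CohCfg G) (H : Subgroup G) : Prop :=
  IsParabolic X (eRelSet H)

/-- A normal circulant scheme: every automorphism fixing the identity is a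
group automorphism. -/
def IsNormalCirc {G : Type u} [Group G] (X : CohCfg G) : Prop :=
  ∀ f : G → G, Function.Bijective f → (∀ s ∈ X.S, relImage f s = s) → f 1 = 1 →
    ∀ a b : G, f (a * b) = f a * f b

/-- Normality of a circulant scheme presented on a section `Δ/e` of a group `G`
(the points are cosets): every automorphism fixing the class of `1` respects the
coset multiplication. -/
def IsNormalSec {G : Type u} [Group G] (Δ : Set G) (e : Set (G × G))
    (Y : CohCfg (Sec Δ e)) : Prop :=
  ∀ F : Sec Δ e → Sec Δ e, Function.Bijective F → (∀ t ∈ Y.S, relImage F t = t) →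
    (∀ Γ : Sec Δ e, (1 : G) ∈ Γ.1 → F Γ = Γ) →
    ∀ Γ Γ' Γ'' : Sec Δ e, Γ''.1 = Set.image2 (· * ·) Γ.1 Γ'.1 →
      (F Γ'').1 = Set.image2 (· * ·) (F Γ).1 (F Γ').1

/-- Normality of a circulant scheme presented on (the subtype of) a subgroup `U ⊆ G`. -/
def IsNormalRest {G : Type u} [Group G] (U : Set G) (Y : CohCfg ↥U) : Prop :=
  ∀ F : ↥U → ↥U, Function.Bijective F → (∀ t ∈ Y.S, relImage F t = t) →
    (∀ x : ↥U, x.1 = 1 → F x = x) →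
    ∀ x y z : ↥U, z.1 = x.1 * y.1 → (F z).1 = (F x).1 * (F y).1

/-- `N` is an `X_U`-group: `N ≤ U` and the restriction of `e(N)` to `U` is a
relation of the restriction `X_U`. -/
def SubXGroup {G : Type u} [Group G] (X : CohCfg G) (U N : Subgroup G) : Prop :=
  N ≤ U ∧ ∀ s ∈ X.S, (∃ p ∈ s, p.1 ∈ U ∧ p.2 ∈ U ∧ p.1⁻¹ * p.2 ∈ N) →
    ∀ p ∈ s, p.1 ∈ U → p.2 ∈ U → p.1⁻¹ * p.2 ∈ N

end CohCfg

/-!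
The partition `S` amounts to the equivalence of lying in the same basis relation, and condition (C3)
lets one transport a triangle: if `(a, b) ~ (c, d)`, then every `x` has a partner `y` with
`(a, x) ~ (c, y)` and `(x, b) ~ (y, d)`. If `α` is a regular point of `X`, so is every `β` in its
fiber, and then `y` is determined by `β` and the basis relation of `(β, y)`. Hence if `X' ≥ X` and
the fiber of `α` in `X` is still a fiber of `X'`, a partner obtained by transport in `X'` has to be
the one given in `X`, which shows that equivalence in `X` implies equivalence in `X'`: first for
pairs starting at `α`, then for arbitrary pairs, by comparing both of their points with `α`.
-/

namespace CohCfg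

variable {Ω : Type u} {X X' : CohCfg Ω} {a b c d α β : Ω} {Δ : Set Ω}

theorem isPartition_S (X : CohCfg Ω) : Setoid.IsPartition X.S := by
  refine ⟨fun h => (X.nonemp ∅ h).ne_empty rfl, fun p => ?_⟩
  obtain ⟨s, hs, hps⟩ := X.cover p
  refine ⟨s, ⟨hs, hps⟩, fun t ⟨ht, hpt⟩ => by_contra fun hts => ?_⟩
  exact (X.disj t ht s hs hts).subset ⟨hpt, hps⟩

/-- The equivalence relation on `Ω × Ω` whose classes are the basis relations of `X`. -/
def pairSetoid (X : CohCfg Ω) : Setoid (Ω × Ω) :=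
  Setoid.mkClasses X.S X.isPartition_S.2

theorem classes_pairSetoid (X : CohCfg Ω) : X.pairSetoid.classes = X.S :=
  Setoid.classes_mkClasses X.S X.isPartition_S

theorem pairSetoid_iff {p q : Ω × Ω} : X.pairSetoid p q ↔ ∃ s ∈ X.S, p ∈ s ∧ q ∈ s := by
  rw [Setoid.rel_iff_exists_classes, classes_pairSetoid]

theorem pairSetoid_iff_of_mem {s : Set (Ω × Ω)} (hs : s ∈ X.S) {p q : Ω × Ω} (hp : p ∈ s) :
    X.pairSetoid p q ↔ q ∈ s := by
  refine pairSetoid_iff.trans ⟨fun ⟨t, ht, hpt, hqt⟩ => ?_, fun hq => ⟨s, hs, hp, hq⟩⟩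
  rwa [Setoid.eq_of_mem_eqv_class X.isPartition_S.2 hs hp ht hpt]

theorem pairSetoid_injective : Function.Injective (pairSetoid (Ω := Ω)) := by
  intro X X' h
  have hS : X.S = X'.S := by rw [← classes_pairSetoid X, h, classes_pairSetoid]
  cases X
  cases X'
  cases hS
  rfl

theorem le_iff_pairSetoid_le : le X X' ↔ X'.pairSetoid ≤ X.pairSetoid := by
  constructor
  · intro hle p q hpq
    obtain ⟨t, ht, hp, hq⟩ := pairSetoid_iff.1 hpq
    obtain ⟨s, hs, hps⟩ := X.cover p
    exact pairSetoid_iff.2 ⟨s, hs, hps, hle s hs t ht ⟨p, hp, hps⟩ hq⟩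
  · rintro h s hs t ht ⟨p, hpt, hps⟩ q hqt
    exact (pairSetoid_iff_of_mem hs hps).1 (h (pairSetoid_iff.2 ⟨t, ht, hpt, hqt⟩))

theorem pairSetoid_swap (h : X.pairSetoid (a, b) (c, d)) : X.pairSetoid (b, a) (d, c) := by
  obtain ⟨s, hs, hab, hcd⟩ := pairSetoid_iff.1 h
  exact pairSetoid_iff.2 ⟨_, X.conv s hs, hab, hcd⟩

theorem eq_of_pairSetoid_diag (h : X.pairSetoid (a, a) (b, c)) : b = c := by
  obtain ⟨s, hs, ha, hbc⟩ := pairSetoid_iff.1 h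
  exact X.diag s hs ⟨_, ha, rfl⟩ _ hbc

theorem exists_pairSetoid_triangle (h : X.pairSetoid (a, b) (c, d)) (x : Ω) :
    ∃ y, X.pairSetoid (a, x) (c, y) ∧ X.pairSetoid (x, b) (y, d) := by
  have := X.finite
  obtain ⟨t, ht, hab, hcd⟩ := pairSetoid_iff.1 h
  obtain ⟨r, hr, hax⟩ := X.cover (a, x)
  obtain ⟨s, hs, hxb⟩ := X.cover (x, b)
  have hpos : 0 < {γ : Ω | (a, γ) ∈ r ∧ (γ, b) ∈ s}.ncard :=
    (Set.ncard_pos (Set.toFinite _)).2 ⟨x, hax, hxb⟩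
  rw [X.inum r hr s hs t ht _ hab _ hcd] at hpos
  obtain ⟨y, hcy, hyd⟩ := (Set.ncard_pos (Set.toFinite _)).1 hpos
  exact ⟨y, pairSetoid_iff.2 ⟨r, hr, hax, hcy⟩, pairSetoid_iff.2 ⟨s, hs, hxb, hyd⟩⟩

theorem pairSetoid_diag_left (h : X.pairSetoid (a, b) (c, d)) : X.pairSetoid (a, a) (c, c) := by
  obtain ⟨y, hay, -⟩ := exists_pairSetoid_triangle h a
  obtain rfl := eq_of_pairSetoid_diag hay
  exact hay

theorem exists_isFiber (X : CohCfg Ω) (a : Ω) : ∃ Δ, IsFiber X Δ ∧ a ∈ Δ := by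
  obtain ⟨s, hs, ha⟩ := X.cover (a, a)
  have hdiag : diagRel {x | (x, x) ∈ s} = s := by
    ext ⟨x, y⟩
    refine ⟨fun ⟨(hxy : x = y), hx⟩ => hxy ▸ hx, fun h => ?_⟩
    obtain rfl : x = y := X.diag s hs ⟨_, ha, rfl⟩ _ h
    exact ⟨rfl, h⟩
  exact ⟨{x | (x, x) ∈ s}, by rwa [IsFiber, hdiag], ha⟩

theorem IsFiber.pairSetoid_diag_iff (hΔ : IsFiber X Δ) (ha : a ∈ Δ) :
    X.pairSetoid (a, a) (b, b) ↔ b ∈ Δ :=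
  (pairSetoid_iff_of_mem hΔ ⟨rfl, ha⟩).trans (and_iff_right rfl)

/-- A regular point `α` of `X`, i.e. `|αs| ≤ 1` for all basis relations `s`; thus `X` is partly
regular if it has a regular point. -/
def IsRegularPoint (X : CohCfg Ω) (α : Ω) : Prop :=
  ∀ s ∈ X.S, (pointSet s α).ncard ≤ 1

theorem isRegularPoint_iff :
    IsRegularPoint X α ↔ ∀ x y, X.pairSetoid (α, x) (α, y) → x = y := by
  have := X.finite
  simp only [IsRegularPoint, Set.ncard_le_one (Set.toFinite _), pairSetoid_iff]
  exact ⟨fun h x y ⟨s, hs, hx, hy⟩ => h s hs x hx y hy,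
    fun h s hs x hx y hy => h x y ⟨s, hs, hx, hy⟩⟩

namespace IsRegularPoint

theorem eq_of_pairSetoid (hα : IsRegularPoint X α) {p : Ω × Ω} (hb : X.pairSetoid p (α, b))
    (hc : X.pairSetoid p (α, c)) : b = c :=
  isRegularPoint_iff.1 hα b c (X.pairSetoid.trans' (X.pairSetoid.symm' hb) hc)

theorem of_pairSetoid_diag (hα : IsRegularPoint X α) (hαβ : X.pairSetoid (α, α) (β, β)) :
    IsRegularPoint X β := by
  refine isRegularPoint_iff.2 fun y z hyz => ?_
  obtain ⟨w, hyw, -⟩ := exists_pairSetoid_triangle (X.pairSetoid.symm' hαβ) y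
  obtain ⟨v, hzv, hvw⟩ := exists_pairSetoid_triangle hyw z
  obtain rfl : w = v := hα.eq_of_pairSetoid hyw (X.pairSetoid.trans' hyz hzv)
  exact (eq_of_pairSetoid_diag (X.pairSetoid.symm' hvw)).symm

theorem pairSetoid_of_le (hβ : IsRegularPoint X β) (hle : le X X')
    (hαβ : X'.pairSetoid (α, α) (β, β)) (h : X.pairSetoid (α, a) (β, b)) :
    X'.pairSetoid (α, a) (β, b) := by
  obtain ⟨y, hay, -⟩ := exists_pairSetoid_triangle hαβ a
  obtain rfl : y = b := hβ.eq_of_pairSetoid (le_iff_pairSetoid_le.1 hle hay) h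
  exact hay

theorem pairSetoid_le (hα : IsRegularPoint X α) (hαΔ : α ∈ Δ) (hle : le X X')
    (hΔ : IsFiber X Δ) (hΔ' : IsFiber X' Δ) : X.pairSetoid ≤ X'.pairSetoid := by
  rintro ⟨a, b⟩ ⟨c, d⟩ h
  obtain ⟨β, haα, hαb⟩ := exists_pairSetoid_triangle h α
  have hαβ := pairSetoid_diag_left hαb
  have hαβ' : X'.pairSetoid (α, α) (β, β) :=
    (hΔ'.pairSetoid_diag_iff hαΔ).2 ((hΔ.pairSetoid_diag_iff hαΔ).1 hαβ)
  have hβ := hα.of_pairSetoid_diag hαβ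
  have haα' : X'.pairSetoid (a, α) (c, β) :=
    pairSetoid_swap (hβ.pairSetoid_of_le hle hαβ' (pairSetoid_swap haα))
  obtain ⟨e, hab', hbα'⟩ := exists_pairSetoid_triangle haα' b
  have hαb' : X.pairSetoid (α, b) (β, e) :=
    le_iff_pairSetoid_le.1 hle (pairSetoid_swap hbα')
  obtain rfl : e = d := hβ.eq_of_pairSetoid hαb' hαb
  exact hab'

end IsRegularPoint

end CohCfg

open CohCfg in
theorem stmt_1_general {Ω : Type u} {X X' : CohCfg Ω} {α : Ω} {Δ : Set Ω}
    (hα : IsRegularPoint X α) (hαΔ : α ∈ Δ) (hΔ : IsFiber X Δ) (hle : CohCfg.le X X') :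
    X' = X ↔ IsFiber X' Δ :=
  ⟨fun h => h ▸ hΔ, fun hΔ' => pairSetoid_injective <|
    le_antisymm (le_iff_pairSetoid_le.1 hle) (hα.pairSetoid_le hαΔ hle hΔ hΔ')⟩

open CohCfg in
/-- Corollary: a partly regular `X` and an extension `X' ≥ X` are equal iff they
have the same fibers. -/
theorem stmt_1 {Ω : Type u} (X X' : CohCfg Ω) (hreg : PartlyRegular X)
    (hle : CohCfg.le X X') :
    X' = X ↔ (∀ Δ : Set Ω, IsFiber X' Δ ↔ IsFiber X Δ) := by
  obtain ⟨α, hα⟩ := hreg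
  obtain ⟨Δ, hΔ, hαΔ⟩ := exists_isFiber X α
  exact ⟨fun h _ => h ▸ Iff.rfl, fun h => (stmt_1_general hα hαΔ hΔ hle).2 ((h Δ).2 hΔ)⟩
end

section
/- Let X be a sesquiclosed coherent configuration and 𝔖 a section of X. Then the coherent configuration X_𝔖 is sesquiclosed. -/
open Set

universe u

/-!
Call triples `(α, β, γ)` and `(α', β', γ')` equivalent if the Weisfeiler-Leman algorithm, started
from `X` with `α` and `α'` individualized, does not separate `(β, γ)` from `(β', γ')`. For `α = α'`
the equivalence classes are the basis relations of `X_α`, and if the triples `(α, α, α)` and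
`(α', α', α')` are equivalent, then matching equivalent triples is an `(α, α')`-extension of the
identity. Hence `X` is sesquiclosed if and only if `(α, β, β)` and `(α', β', β')` are equivalent
whenever `(α, β)` and `(α', β')` lie in one basis relation.

This criterion passes to a section by choosing representatives, once equivalence of triples of
points is known to imply equivalence of the triples of their classes. Equivalence provides
bijections of points that respect `e` only pairwise with respect to a fixed pair, so they need not
map classes to classes; but matched points lie in classes of equal size, and then Hall's theorem
produces a bijection of classes.
-/

section Transversals

variable {A A' Q Q' : Type*}

lemma ncard_setOf_eq_of_equiv {P : A → Prop} {P' : A' → Prop} (σ : A ≃ A')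
    (h : ∀ a, P a ↔ P' (σ a)) : {a | P a}.ncard = {a' | P' a'}.ncard :=
  Set.ncard_congr' (σ.subtypeEquiv h)

lemma exists_equiv_apply_eq_of_ncard_preimage_eq [Finite A] [Finite A'] {f : A → Q} {f' : A' → Q}
    (h : ∀ q, (f ⁻¹' {q}).ncard = (f' ⁻¹' {q}).ncard) :
    ∃ σ : A ≃ A', ∀ a, f' (σ a) = f a :=
  ⟨Equiv.ofFiberEquiv fun q => (Finite.card_eq.1 (h q)).some,
    Equiv.ofFiberEquiv_map _⟩

lemma sum_inv_ncard_fiber [Fintype A] [DecidableEq Q] {f : A → Q} (hf : f.Surjective)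
    (S : Finset Q) :
    ∑ a with f a ∈ S, ((f ⁻¹' {f a}).ncard : ℚ)⁻¹ = S.card := by
  have sum_fiber (q : Q) : ∑ a with f a = q, ((f ⁻¹' {f a}).ncard : ℚ)⁻¹ = 1 := by
    obtain ⟨a, rfl⟩ := hf q
    have fiber_card : (Finset.univ.filter fun b => f b = f a).card = (f ⁻¹' {f a}).ncard := by
      rw [← Set.ncard_coe_finset]
      congr 1
      ext b
      simp
    have fiber_ne : (f ⁻¹' {f a}).ncard ≠ 0 := Set.ncard_ne_zero_of_mem (a := a) rfl
    calc ∑ b with f b = f a, ((f ⁻¹' {f b}).ncard : ℚ)⁻¹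
        = ∑ b with f b = f a, ((f ⁻¹' {f a}).ncard : ℚ)⁻¹ :=
          Finset.sum_congr rfl fun b hb => by rw [(Finset.mem_filter.1 hb).2]
      _ = 1 := by rw [Finset.sum_const, fiber_card, nsmul_eq_mul, mul_inv_cancel₀ (by simpa)]
  rw [← Finset.sum_fiberwise_of_maps_to (t := S) (g := f) (by simp)]
  simp only [Finset.filter_filter]
  calc ∑ q ∈ S, ∑ a with f a ∈ S ∧ f a = q, ((f ⁻¹' {f a}).ncard : ℚ)⁻¹
      = ∑ q ∈ S, ∑ a with f a = q, ((f ⁻¹' {f a}).ncard : ℚ)⁻¹ := by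
        refine Finset.sum_congr rfl fun q hq => Finset.sum_congr ?_ fun _ _ => rfl
        ext a
        simp +contextual [hq]
    _ = S.card := by simp [sum_fiber]

/-- Hall's theorem: weighting each point by the inverse of the size of its fibre, the fibres over
`S` weigh `|S|`, and `σ` carries them into the fibres over the neighbours of `S`. -/
lemma exists_injective_of_ncard_fiber_eq [Finite A] [Finite A'] {f : A → Q} {f' : A' → Q'}
    (hf : f.Surjective) (hf' : f'.Surjective) (σ : A ≃ A')
    (h : ∀ a, (f ⁻¹' {f a}).ncard = (f' ⁻¹' {f' (σ a)}).ncard) :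
    ∃ τ : Q → Q', τ.Injective ∧ ∀ q, ∃ a, f a = q ∧ f' (σ a) = τ q := by
  classical
  have := Fintype.ofFinite A
  have := Fintype.ofFinite A'
  have := Fintype.ofSurjective f' hf'
  refine (Fintype.all_card_le_filter_rel_iff_exists_injective
    fun q q' => ∃ a, f a = q ∧ f' (σ a) = q').1 fun S => ?_
  set N : Finset Q' := {q' | ∃ q ∈ S, ∃ a, f a = q ∧ f' (σ a) = q'}
  have weight_le : (S.card : ℚ) ≤ N.card :=
    calc (S.card : ℚ) = ∑ a with f a ∈ S, ((f' ⁻¹' {f' (σ a)}).ncard : ℚ)⁻¹ := by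
          simp only [← sum_inv_ncard_fiber hf S, h]
      _ ≤ ∑ a with f' (σ a) ∈ N, ((f' ⁻¹' {f' (σ a)}).ncard : ℚ)⁻¹ := by
          refine Finset.sum_le_sum_of_subset_of_nonneg (fun a ha => ?_) fun _ _ _ => by positivity
          simp only [Finset.mem_filter, Finset.mem_univ, true_and, N] at ha ⊢
          exact ⟨_, ha, a, rfl, rfl⟩
      _ = ∑ a' with f' a' ∈ N, ((f' ⁻¹' {f' a'}).ncard : ℚ)⁻¹ :=
          Finset.sum_equiv σ (by simp) fun _ _ => rfl
      _ = N.card := sum_inv_ncard_fiber hf' N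
  exact_mod_cast weight_le

lemma exists_equiv_of_ncard_fiber_eq [Finite A] [Finite A'] {f : A → Q} {f' : A' → Q'}
    (hf : f.Surjective) (hf' : f'.Surjective) (σ : A ≃ A')
    (h : ∀ a, (f ⁻¹' {f a}).ncard = (f' ⁻¹' {f' (σ a)}).ncard) :
    ∃ τ : Q ≃ Q', ∀ q, ∃ a, f a = q ∧ f' (σ a) = τ q := by
  have := Finite.of_surjective f hf
  have := Finite.of_surjective f' hf'
  obtain ⟨τ, hτ, meets⟩ := exists_injective_of_ncard_fiber_eq hf hf' σ h
  obtain ⟨τ', hτ', -⟩ := exists_injective_of_ncard_fiber_eq hf' hf σ.symm fun a' => by simp [h]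
  exact ⟨Equiv.ofBijective τ (hτ.bijective_of_nat_card_le (Nat.card_le_card_of_injective τ' hτ')),
    meets⟩

end Transversals

namespace CohCfg

section BasisRelations

variable {Ω : Type u} (X : CohCfg Ω)

/-- The basis relation of `X` containing the pair `p`. -/
noncomputable def basisRel (p : Ω × Ω) : Set (Ω × Ω) := (X.cover p).choose

lemma basisRel_mem (p : Ω × Ω) : X.basisRel p ∈ X.S := (X.cover p).choose_spec.1

lemma mem_basisRel (p : Ω × Ω) : p ∈ X.basisRel p := (X.cover p).choose_spec.2

variable {X}

lemma eq_of_mem_of_mem {s t : Set (Ω × Ω)} (hs : s ∈ X.S) (ht : t ∈ X.S) {p : Ω × Ω}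
    (hps : p ∈ s) (hpt : p ∈ t) : s = t :=
  by_contra fun hne => Set.disjoint_left.1 (Set.disjoint_iff_inter_eq_empty.2
    (X.disj s hs t ht hne)) hps hpt

lemma basisRel_eq_iff {s : Set (Ω × Ω)} (hs : s ∈ X.S) {p : Ω × Ω} : X.basisRel p = s ↔ p ∈ s :=
  ⟨fun h => h ▸ X.mem_basisRel p,
    fun h => eq_of_mem_of_mem (X.basisRel_mem p) hs (X.mem_basisRel p) h⟩

lemma fst_eq_snd_of_mem_basisRel {a : Ω} {p : Ω × Ω} (hp : p ∈ X.basisRel (a, a)) :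
    p.1 = p.2 :=
  X.diag _ (X.basisRel_mem _) ⟨_, X.mem_basisRel _, rfl⟩ p hp

lemma isRelationOf_of_mem {s : Set (Ω × Ω)} (hs : s ∈ X.S) : IsRelationOf X s :=
  fun _ ht ⟨_, hpt, hps⟩ => (eq_of_mem_of_mem ht hs hpt hps).subset

lemma mem_iff_of_mem_basisRel {r : Set (Ω × Ω)} (hr : IsRelationOf X r) {p q : Ω × Ω}
    (hq : q ∈ X.basisRel p) : p ∈ r ↔ q ∈ r := by
  refine ⟨fun hp => hr _ (X.basisRel_mem p) ⟨p, X.mem_basisRel p, hp⟩ hq, fun hqr => ?_⟩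
  exact hr _ (X.basisRel_mem p) ⟨q, hq, hqr⟩ (X.mem_basisRel p)

lemma isFiber_iff {Δ : Set Ω} :
    IsFiber X Δ ↔ ∃ a, Δ = {b | (b, b) ∈ X.basisRel (a, a)} := by
  constructor
  · intro hΔ
    obtain ⟨⟨a, b⟩, hab, ha⟩ := X.nonemp _ hΔ
    obtain rfl : a = b := hab
    refine ⟨a, Set.ext fun b => ?_⟩
    rw [(basisRel_eq_iff hΔ).2 ⟨rfl, ha⟩]
    exact ⟨fun hb => ⟨rfl, hb⟩, fun hb => hb.2⟩
  · rintro ⟨a, rfl⟩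
    suffices diagRel {b | (b, b) ∈ X.basisRel (a, a)} = X.basisRel (a, a) by
      rw [IsFiber, this]
      exact X.basisRel_mem _
    ext ⟨b, c⟩
    constructor
    · rintro ⟨hbc, hb⟩
      obtain rfl : b = c := hbc
      exact hb
    · intro hbc
      obtain rfl : b = c := fst_eq_snd_of_mem_basisRel hbc
      exact ⟨rfl, hbc⟩

lemma cnum_ne_zero_iff [Finite Ω] {r s : Set (Ω × Ω)} {p : Ω × Ω} :
    cnum r s p ≠ 0 ↔ ∃ c, (p.1, c) ∈ r ∧ (c, p.2) ∈ s := by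
  rw [← Nat.pos_iff_ne_zero, cnum, Set.ncard_pos]
  rfl

lemma mem_basisRel_fst {a b a' b' : Ω} (h : (a', b') ∈ X.basisRel (a, b)) :
    (a', a') ∈ X.basisRel (a, a) := by
  have := X.finite
  have count_ne : cnum (X.basisRel (a, a)) (X.basisRel (a, b)) (a', b') ≠ 0 := by
    have count_eq := X.inum _ (X.basisRel_mem (a, a)) _ (X.basisRel_mem (a, b)) _
      (X.basisRel_mem (a, b)) _ h _ (X.mem_basisRel _)
    rw [cnum, count_eq]
    exact cnum_ne_zero_iff.2 ⟨a, X.mem_basisRel _, X.mem_basisRel _⟩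
  obtain ⟨c, hc, -⟩ := cnum_ne_zero_iff.1 count_ne
  obtain rfl : a' = c := fst_eq_snd_of_mem_basisRel hc
  exact hc

end BasisRelations

namespace IsAlgIso

variable {Ω Ω' : Type u} {X : CohCfg Ω} {X' : CohCfg Ω'}
  {φ : Set (Ω × Ω) → Set (Ω' × Ω')}

protected lemma id (X : CohCfg Ω) : IsAlgIso X X id :=
  ⟨Set.bijOn_id _, X.inum⟩

variable (hφ : IsAlgIso X X' φ)

include hφ

lemma image_mem {s : Set (Ω × Ω)} (hs : s ∈ X.S) : φ s ∈ X'.S := hφ.bijOn.mapsTo hs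

lemma image_eq_iff {s : Set (Ω × Ω)} (hs : s ∈ X.S) {p : Ω × Ω} :
    φ (X.basisRel p) = φ s ↔ p ∈ s :=
  (hφ.bijOn.injOn.eq_iff (X.basisRel_mem p) hs).trans (basisRel_eq_iff hs)

lemma mem_iff_mem_image {s : Set (Ω × Ω)} (hs : s ∈ X.S) {p : Ω × Ω} {q : Ω' × Ω'}
    (hq : q ∈ φ (X.basisRel p)) : p ∈ s ↔ q ∈ φ s := by
  rw [← hφ.image_eq_iff hs, ← (basisRel_eq_iff (hφ.image_mem (X.basisRel_mem p))).2 hq,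
    basisRel_eq_iff (hφ.image_mem hs)]

lemma exists_mem_image (p : Ω × Ω) : ∃ q, q ∈ φ (X.basisRel p) :=
  X'.nonemp _ (hφ.image_mem (X.basisRel_mem p))

lemma mem_algImage_iff {r : Set (Ω × Ω)} (hr : IsRelationOf X r) {p : Ω × Ω} {q : Ω' × Ω'}
    (hq : q ∈ φ (X.basisRel p)) : q ∈ algImage X φ r ↔ p ∈ r := by
  constructor
  · rintro ⟨_, ⟨s, ⟨hs, hsr⟩, rfl⟩, hqs⟩
    exact hsr ((hφ.mem_iff_mem_image hs hq).2 hqs)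
  · intro hp
    exact ⟨_, ⟨_, ⟨X.basisRel_mem p, hr _ (X.basisRel_mem p) ⟨p, X.mem_basisRel p, hp⟩⟩, rfl⟩, hq⟩

lemma exists_equiv {p : Ω × Ω} {q : Ω' × Ω'} (hq : q ∈ φ (X.basisRel p)) :
    ∃ σ : Ω ≃ Ω', ∀ c, (q.1, σ c) ∈ φ (X.basisRel (p.1, c)) ∧
      (σ c, q.2) ∈ φ (X.basisRel (c, p.2)) := by
  have := X.finite
  have := X'.finite
  let colour (c : Ω) := (φ (X.basisRel (p.1, c)), φ (X.basisRel (c, p.2)))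
  let colour' (c : Ω') := (X'.basisRel (q.1, c), X'.basisRel (c, q.2))
  have ncard_eq (z) : (colour ⁻¹' {z}).ncard = (colour' ⁻¹' {z}).ncard := by
    obtain ⟨u, v⟩ := z
    by_cases huv : u ∈ X'.S ∧ v ∈ X'.S
    · obtain ⟨r, hr, rfl⟩ := hφ.bijOn.surjOn huv.1
      obtain ⟨s, hs, rfl⟩ := hφ.bijOn.surjOn huv.2
      convert hφ.cnum_eq r hr s hs _ (X.basisRel_mem p) p (X.mem_basisRel p) q hq using 1
      · congr 1
        ext c
        simp [colour, hφ.image_eq_iff hr, hφ.image_eq_iff hs]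
      · congr 1
        ext c
        simp [colour', basisRel_eq_iff huv.1, basisRel_eq_iff huv.2]
    · have not_mem_range : (u, v) ∉ Set.range colour := by
        rintro ⟨c, hc⟩
        obtain ⟨rfl, rfl⟩ := Prod.mk.inj hc
        exact huv ⟨hφ.image_mem (X.basisRel_mem _), hφ.image_mem (X.basisRel_mem _)⟩
      have not_mem_range' : (u, v) ∉ Set.range colour' := by
        rintro ⟨c, hc⟩
        obtain ⟨rfl, rfl⟩ := Prod.mk.inj hc
        exact huv ⟨X'.basisRel_mem _, X'.basisRel_mem _⟩
      rw [Set.preimage_singleton_eq_empty.2 not_mem_range,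
        Set.preimage_singleton_eq_empty.2 not_mem_range', Set.ncard_empty, Set.ncard_empty]
  obtain ⟨σ, hσ⟩ := exists_equiv_apply_eq_of_ncard_preimage_eq ncard_eq
  refine ⟨σ, fun c => ?_⟩
  obtain ⟨left_eq, right_eq⟩ := Prod.mk.inj (hσ c)
  exact ⟨left_eq ▸ X'.mem_basisRel _, right_eq ▸ X'.mem_basisRel _⟩

lemma eq_of_mem_image_diag {a : Ω} {q : Ω' × Ω'} (hq : q ∈ φ (X.basisRel (a, a))) :
    q.1 = q.2 := by
  obtain ⟨σ, hσ⟩ := hφ.exists_equiv hq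
  obtain ⟨c, hc⟩ := σ.surjective q.2
  obtain ⟨left, right⟩ := hσ c
  rw [hc] at left right
  obtain rfl : a = c := fst_eq_snd_of_mem_basisRel
    ((hφ.mem_iff_mem_image (X.basisRel_mem (a, a)) left).2 hq)
  exact X'.diag _ (hφ.image_mem (X.basisRel_mem _)) ⟨_, right, rfl⟩ q hq

end IsAlgIso

section BackAndForth

/-- The winning condition of the bijective pebble game on pairs of points: the pairs carry a label,
and whenever `E` matches two labelled pairs, some bijection keeps `E` intact when either entry is
replaced by a point and its image. -/
def BackAndForth {ι A : Type*} (E : ι × A × A → ι × A × A → Prop) : Prop :=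
  ∀ ⦃i j a b a' b'⦄, E (i, a, b) (j, a', b') →
    ∃ σ : A ≃ A, ∀ c, E (i, a, c) (j, a', σ c) ∧ E (i, c, b) (j, σ c, b')

variable {ι : Type*} {Ω : Type u}

/-- `E` is a back-and-forth relation between labelled pairs that refines `X`, where the pairs with
label `i` are seen from the point `g i`, which `E` respects. Between labels `i` and `j`, such
relations are approximations to algebraic isomorphisms from `X_{g i}` to `X_{g j}` extending the
identity of `X`. -/
structure CoherentOver (X : CohCfg Ω) (g : ι → Ω) (E : ι × Ω × Ω → ι × Ω × Ω → Prop) :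
    Prop where
  mem_iff : ∀ ⦃s⦄, s ∈ X.S → ∀ ⦃x y⦄, E x y → (x.2 ∈ s ↔ y.2 ∈ s)
  base_iff : ∀ ⦃x y⦄, E x y → (x.2 = (g x.1, g x.1) ↔ y.2 = (g y.1, g y.1))
  backAndForth : BackAndForth E

namespace CoherentOver

variable {X : CohCfg Ω} {g : ι → Ω} {E F : ι × Ω × Ω → ι × Ω × Ω → Prop}

lemma refl (X : CohCfg Ω) (g : ι → Ω) : CoherentOver X g Eq where
  mem_iff := by rintro s - x _ rfl; rfl
  base_iff := by rintro x _ rfl; rfl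
  backAndForth := by rintro i j a b a' b' ⟨⟩; exact ⟨Equiv.refl Ω, fun c => ⟨rfl, rfl⟩⟩

lemma symm (hE : CoherentOver X g E) : CoherentOver X g (flip E) where
  mem_iff _ hs _ _ h := (hE.mem_iff hs h).symm
  base_iff _ _ h := (hE.base_iff h).symm
  backAndForth i j a b a' b' h := by
    obtain ⟨σ, hσ⟩ := hE.backAndForth h
    exact ⟨σ.symm, fun c => by simpa [flip] using hσ (σ.symm c)⟩

lemma trans (hE : CoherentOver X g E) (hF : CoherentOver X g F) :
    CoherentOver X g (Relation.Comp E F) where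
  mem_iff := by rintro s hs x y ⟨z, hxz, hzy⟩; exact (hE.mem_iff hs hxz).trans (hF.mem_iff hs hzy)
  base_iff := by rintro x y ⟨z, hxz, hzy⟩; exact (hE.base_iff hxz).trans (hF.base_iff hzy)
  backAndForth := by
    rintro i j a b a' b' ⟨z, hxz, hzy⟩
    obtain ⟨σ, hσ⟩ := hE.backAndForth hxz
    obtain ⟨τ, hτ⟩ := hF.backAndForth hzy
    exact ⟨σ.trans τ, fun c => ⟨⟨_, (hσ c).1, (hτ _).1⟩, ⟨_, (hσ c).2, (hτ _).2⟩⟩⟩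

lemma swap (hE : CoherentOver X g E) :
    CoherentOver X g fun x y => E (x.1, x.2.swap) (y.1, y.2.swap) where
  mem_iff _ hs _ _ h := hE.mem_iff (X.conv _ hs) h
  base_iff _ _ h := by simpa [Prod.ext_iff, and_comm] using hE.base_iff h
  backAndForth _ _ _ _ _ _ h := by
    obtain ⟨σ, hσ⟩ := hE.backAndForth h
    exact ⟨σ, fun c => (hσ c).symm⟩

variable (hE : CoherentOver X g E) {i j : ι} {a b a' b' : Ω}

include hE

lemma mem_iff_of_isRelationOf {r : Set (Ω × Ω)} (hr : IsRelationOf X r)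
    {x y : ι × Ω × Ω} (h : E x y) : x.2 ∈ r ↔ y.2 ∈ r :=
  mem_iff_of_mem_basisRel hr
    ((hE.mem_iff (X.basisRel_mem _) h).1 (X.mem_basisRel _))

lemma diag_left (h : E (i, a, b) (j, a', b')) : E (i, a, a) (j, a', a') := by
  obtain ⟨σ, hσ⟩ := hE.backAndForth h
  have image_diag := (hE.mem_iff (X.basisRel_mem (a, a)) (hσ a).1).1 (X.mem_basisRel _)
  obtain rfl : a' = σ a := fst_eq_snd_of_mem_basisRel image_diag
  exact (hσ a).1

lemma left_eq_base_iff (h : E (i, a, b) (j, a', b')) : a = g i ↔ a' = g j := by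
  simpa using hE.base_iff (hE.diag_left h)

lemma replace_left_base (h : E (i, a, b) (j, a', b')) : E (i, g i, b) (j, g j, b') := by
  obtain ⟨σ, hσ⟩ := hE.backAndForth h
  have image_base : σ (g i) = g j := (hE.left_eq_base_iff (hσ (g i)).2).1 rfl
  exact image_base ▸ (hσ (g i)).2

lemma base_right_mem_iff {r : Set (Ω × Ω)} (hr : IsRelationOf X r)
    (h : E (i, a, b) (j, a', b')) : (g i, b) ∈ r ↔ (g j, b') ∈ r :=
  hE.mem_iff_of_isRelationOf hr (hE.replace_left_base h)

lemma base_left_mem_iff {r : Set (Ω × Ω)} (hr : IsRelationOf X r)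
    (h : E (i, a, b) (j, a', b')) : (g i, a) ∈ r ↔ (g j, a') ∈ r :=
  hE.base_right_mem_iff hr (hE.diag_left h)

lemma exists_match (h : E (i, a, b) (j, a', b')) (p : Ω × Ω) : ∃ q, E (i, p) (j, q) := by
  obtain ⟨σ, hσ⟩ := hE.backAndForth h
  obtain ⟨τ, hτ⟩ := hE.backAndForth (hσ p.2).1
  exact ⟨_, (hτ p.1).2⟩

end CoherentOver

lemma IsAlgIso.coherentOver {X Z Z' : CohCfg Ω} {φ : Set (Ω × Ω) → Set (Ω × Ω)}
    (hφ : IsAlgIso Z Z' φ) {g : ι → Ω} {i j : ι} (hXZ : le X Z)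
    (extends_id : ∀ s ∈ X.S, algImage Z φ s = s) (hi : {(g i, g i)} ∈ Z.S)
    (base_image : φ {(g i, g i)} = {(g j, g j)}) :
    CoherentOver X g fun x y => x.1 = i ∧ y.1 = j ∧ y.2 ∈ φ (Z.basisRel x.2) where
  mem_iff := by
    rintro s hs x y ⟨-, -, h⟩
    rw [← hφ.mem_algImage_iff (hXZ s hs) h, extends_id s hs]
  base_iff := by
    rintro x y ⟨rfl, rfl, h⟩
    rw [← Set.mem_singleton_iff, hφ.mem_iff_mem_image hi h, base_image, Set.mem_singleton_iff]
  backAndForth := by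
    rintro _ _ a b a' b' ⟨rfl, rfl, h⟩
    obtain ⟨σ, hσ⟩ := hφ.exists_equiv h
    exact ⟨σ, fun c => ⟨⟨rfl, rfl, (hσ c).1⟩, ⟨rfl, rfl, (hσ c).2⟩⟩⟩

/-- The coarsest relation coherent over `X` and `g`: the stable partition computed by the
Weisfeiler-Leman algorithm, with all base points `g i` treated at the same time. -/
def wlSetoid (X : CohCfg Ω) (g : ι → Ω) : Setoid (ι × Ω × Ω) where
  r x y := ∃ E, CoherentOver X g E ∧ E x y
  iseqv :=
    { refl x := ⟨_, CoherentOver.refl X g, rfl⟩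
      symm := by rintro x y ⟨E, hE, h⟩; exact ⟨_, hE.symm, h⟩
      trans := by rintro x y z ⟨E, hE, h⟩ ⟨F, hF, h'⟩; exact ⟨_, hE.trans hF, y, h, h'⟩ }

variable {X : CohCfg Ω} {g : ι → Ω}

lemma CoherentOver.le_wlSetoid {E : ι × Ω × Ω → ι × Ω × Ω → Prop} (hE : CoherentOver X g E)
    {x y : ι × Ω × Ω} (h : E x y) : wlSetoid X g x y :=
  ⟨E, hE, h⟩

lemma coherentOver_wlSetoid (X : CohCfg Ω) (g : ι → Ω) : CoherentOver X g (wlSetoid X g) where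
  mem_iff := by rintro s hs x y ⟨E, hE, h⟩; exact hE.mem_iff hs h
  base_iff := by rintro x y ⟨E, hE, h⟩; exact hE.base_iff h
  backAndForth := by
    rintro i j a b a' b' ⟨E, hE, h⟩
    obtain ⟨σ, hσ⟩ := hE.backAndForth h
    exact ⟨σ, fun c => ⟨hE.le_wlSetoid (hσ c).1, hE.le_wlSetoid (hσ c).2⟩⟩

end BackAndForth

section PointExtensions

variable {ι : Type*} {Ω : Type u} {X : CohCfg Ω} {g : ι → Ω} {i j : ι}

lemma mem_iff_of_mem_comap_classes {s : Set (Ω × Ω)} {p q : Ω × Ω}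
    (hs : s ∈ ((wlSetoid X g).comap (Prod.mk i)).classes) (h : wlSetoid X g (i, p) (i, q)) :
    p ∈ s ↔ q ∈ s := by
  obtain ⟨r, rfl⟩ := hs
  exact ⟨fun hp => (wlSetoid X g).trans' ((wlSetoid X g).symm' h) hp,
    fun hq => (wlSetoid X g).trans' h hq⟩

/-- The point extension `X_{g i}`, with basis relations the classes of `wlSetoid X g` on the pairs
labelled `i`. -/
def pointExt (X : CohCfg Ω) (g : ι → Ω) (i : ι) : CohCfg Ω where
  S := ((wlSetoid X g).comap (Prod.mk i)).classes
  finite := X.finite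
  cover p := ⟨_, Setoid.mem_classes _ p, (wlSetoid X g).refl' _⟩
  disj s hs t ht hst := Set.disjoint_iff_inter_eq_empty.1
    ((Setoid.isPartition_classes _).pairwiseDisjoint hs ht hst)
  nonemp s hs := Setoid.nonempty_of_mem_partition (Setoid.isPartition_classes _) hs
  diag := by
    rintro s hs ⟨⟨a, b⟩, hp, hab⟩ q hq
    obtain rfl : a = b := hab
    obtain ⟨r, rfl⟩ := hs
    exact fst_eq_snd_of_mem_basisRel (((coherentOver_wlSetoid X g).mem_iff (X.basisRel_mem (a, a))
      ((wlSetoid X g).trans' hp ((wlSetoid X g).symm' hq))).1 (X.mem_basisRel _))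
  conv s hs := by
    have wl_swap {p q : Ω × Ω} (h : wlSetoid X g (i, p) (i, q)) :
        wlSetoid X g (i, p.swap) (i, q.swap) :=
      (coherentOver_wlSetoid X g).swap.le_wlSetoid (by simpa using h)
    obtain ⟨p, rfl⟩ := hs
    exact ⟨p.swap, Set.ext fun q => ⟨wl_swap, wl_swap⟩⟩
  inum r hr s hs t ht p hp q hq := by
    obtain ⟨z, rfl⟩ := ht
    obtain ⟨σ, hσ⟩ := (coherentOver_wlSetoid X g).backAndForth
      ((wlSetoid X g).trans' hp ((wlSetoid X g).symm' hq))
    exact ncard_setOf_eq_of_equiv σ fun c => and_congr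
      (mem_iff_of_mem_comap_classes hr (hσ c).1) (mem_iff_of_mem_comap_classes hs (hσ c).2)

lemma wl_of_mem_basisRel {Z : CohCfg Ω} (hXZ : le X Z) (hi : {(g i, g i)} ∈ Z.S) {p q : Ω × Ω}
    (hq : q ∈ Z.basisRel p) : wlSetoid X g (i, p) (i, q) := by
  have extends_id (s) (hs : s ∈ X.S) : algImage Z id s = s := Set.ext fun p =>
    (IsAlgIso.id Z).mem_algImage_iff (hXZ s hs) (Z.mem_basisRel p)
  exact ((IsAlgIso.id Z).coherentOver hXZ extends_id hi rfl).le_wlSetoid ⟨rfl, rfl, hq⟩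

lemma singleton_mem_pointExt (X : CohCfg Ω) (g : ι → Ω) (i : ι) :
    {(g i, g i)} ∈ (pointExt X g i).S := by
  refine ⟨(g i, g i), Set.ext fun p => ⟨?_, fun h => ?_⟩⟩
  · rintro rfl
    exact (wlSetoid X g).refl' _
  · exact ((coherentOver_wlSetoid X g).base_iff h).2 rfl

lemma isPointExt_pointExt (X : CohCfg Ω) (g : ι → Ω) (i : ι) :
    IsPointExt X (g i) (pointExt X g i) := by
  refine ⟨?_, singleton_mem_pointExt X g i, fun Z hXZ hi s hs t ht ⟨p, hpt, hps⟩ q hqt => ?_⟩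
  · rintro s hs _ ⟨r, rfl⟩ ⟨p, hpr, hps⟩ q hqr
    exact ((coherentOver_wlSetoid X g).mem_iff hs
      ((wlSetoid X g).trans' hpr ((wlSetoid X g).symm' hqr))).1 hps
  · rw [← (basisRel_eq_iff ht).2 hpt] at hqt
    exact (mem_iff_of_mem_comap_classes hs (wl_of_mem_basisRel hXZ hi hqt)).1 hps

lemma IsPointExt.mem_basisRel_iff_wl {Z : CohCfg Ω} (hZ : IsPointExt X (g i) Z) {p q : Ω × Ω} :
    q ∈ Z.basisRel p ↔ wlSetoid X g (i, p) (i, q) := by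
  obtain ⟨hXZ, hi, minimal⟩ := hZ
  refine ⟨wl_of_mem_basisRel hXZ hi, fun h => ?_⟩
  obtain ⟨hX, hi', -⟩ := isPointExt_pointExt X g i
  exact minimal _ hX hi' _ (Z.basisRel_mem p) _ (Setoid.mem_classes _ p)
    ⟨p, (wlSetoid X g).refl' _, Z.mem_basisRel p⟩ ((wlSetoid X g).symm' h)

/-- The action on relations of the algebraic isomorphism from `X_{g i}` to `X_{g j}` that matches
equivalent pairs. -/
def transport (X : CohCfg Ω) (g : ι → Ω) (i j : ι) (s : Set (Ω × Ω)) : Set (Ω × Ω) :=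
  {q | ∃ p ∈ s, wlSetoid X g (i, p) (j, q)}

lemma mem_transport_iff {s : Set (Ω × Ω)} (hs : s ∈ (pointExt X g i).S) {p q : Ω × Ω}
    (h : wlSetoid X g (i, p) (j, q)) : q ∈ transport X g i j s ↔ p ∈ s := by
  refine ⟨?_, fun hp => ⟨p, hp, h⟩⟩
  rintro ⟨r, hr, hrq⟩
  exact (mem_iff_of_mem_comap_classes hs
    ((wlSetoid X g).trans' hrq ((wlSetoid X g).symm' h))).1 hr

lemma transport_eq {p q : Ω × Ω} (h : wlSetoid X g (i, p) (j, q)) :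
    transport X g i j {r | wlSetoid X g (i, r) (i, p)} = {r | wlSetoid X g (j, r) (j, q)} := by
  ext r
  constructor
  · rintro ⟨r', hr', hr'r⟩
    exact (wlSetoid X g).trans' ((wlSetoid X g).symm' hr'r) ((wlSetoid X g).trans' hr' h)
  · intro hr
    exact ⟨p, (wlSetoid X g).refl' _, (wlSetoid X g).trans' h ((wlSetoid X g).symm' hr)⟩

lemma isAlgIso_transport (hij : wlSetoid X g (i, g i, g i) (j, g j, g j)) :
    IsAlgIso (pointExt X g i) (pointExt X g j) (transport X g i j) where
  bijOn := by
    refine ⟨?_, ?_, ?_⟩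
    · rintro _ ⟨p, rfl⟩
      obtain ⟨q, hpq⟩ := (coherentOver_wlSetoid X g).exists_match hij p
      exact ⟨q, transport_eq hpq⟩
    · intro s hs t ht hst
      ext p
      obtain ⟨q, hpq⟩ := (coherentOver_wlSetoid X g).exists_match hij p
      rw [← mem_transport_iff hs hpq, hst, mem_transport_iff ht hpq]
    · rintro _ ⟨q, rfl⟩
      obtain ⟨p, hqp⟩ := (coherentOver_wlSetoid X g).exists_match ((wlSetoid X g).symm' hij) q
      exact ⟨_, ⟨p, rfl⟩, transport_eq ((wlSetoid X g).symm' hqp)⟩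
  cnum_eq := by
    rintro r hr s hs t ht p hp q ⟨p', hp', hpq⟩
    obtain ⟨z, rfl⟩ := ht
    have wl_pq : wlSetoid X g (i, p) (j, q) :=
      (wlSetoid X g).trans' hp ((wlSetoid X g).trans' ((wlSetoid X g).symm' hp') hpq)
    obtain ⟨σ, hσ⟩ := (coherentOver_wlSetoid X g).backAndForth wl_pq
    exact ncard_setOf_eq_of_equiv σ fun c => and_congr
      (mem_transport_iff hr (hσ c).1).symm (mem_transport_iff hs (hσ c).2).symm

lemma hasExtension_id_of_wl (hij : wlSetoid X g (i, g i, g i) (j, g j, g j)) :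
    HasExtension X X id (g i) (g j) := by
  have hX := isPointExt_pointExt X g i
  refine ⟨_, _, _, hX, isPointExt_pointExt X g j, isAlgIso_transport hij, fun s hs => ?_, ?_⟩
  · ext q
    obtain ⟨p, hqp⟩ := (coherentOver_wlSetoid X g).exists_match ((wlSetoid X g).symm' hij) q
    rw [(isAlgIso_transport hij).mem_algImage_iff (hX.1 s hs) (p := p)
      ⟨p, mem_basisRel _ p, (wlSetoid X g).symm' hqp⟩]
    exact ((coherentOver_wlSetoid X g).mem_iff hs hqp).symm
  · ext q
    obtain ⟨p, hqp⟩ := (coherentOver_wlSetoid X g).exists_match ((wlSetoid X g).symm' hij) q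
    rw [mem_transport_iff hX.2.1 ((wlSetoid X g).symm' hqp)]
    exact ((coherentOver_wlSetoid X g).base_iff hqp).symm

end PointExtensions

section Characterization

variable {ι : Type*} {Ω : Type u} {X : CohCfg Ω} {g : ι → Ω}

/-- Points lying in the same relation `s` from their base points are indistinguishable, even when
the base points differ. For surjective `g` this is equivalent to `SesquiclosedCfg X`. -/
def WLHomogeneous (X : CohCfg Ω) (g : ι → Ω) : Prop :=
  ∀ ⦃s⦄, s ∈ X.S → ∀ ⦃i j a b⦄, (g i, a) ∈ s → (g j, b) ∈ s → wlSetoid X g (i, a, a) (j, b, b)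

lemma SesquiclosedCfg.hasExtension {s : Set (Ω × Ω)} (hX : SesquiclosedCfg X) (hs : s ∈ X.S)
    {α β a b : Ω} (ha : (α, a) ∈ s) (hb : (β, b) ∈ s) : HasExtension X X id α β := by
  rw [← (basisRel_eq_iff hs).2 ha] at hb
  exact hX.2.2 _ (isFiber_iff.2 ⟨α, rfl⟩) _ (X.mem_basisRel _) _ ⟨rfl, mem_basisRel_fst hb⟩

lemma SesquiclosedCfg.wlHomogeneous (hX : SesquiclosedCfg X) (g : ι → Ω) : WLHomogeneous X g := by
  intro s hs i j a b ha hb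
  obtain ⟨Z, Z', ψ, hZ, hZ', hψ, extends_id, base_image⟩ := hX.hasExtension hs ha hb
  have hE := hψ.coherentOver hZ.1 extends_id hZ.2.1 base_image
  obtain ⟨⟨c, c'⟩, hc⟩ := hψ.exists_mem_image (a, a)
  obtain rfl : c = c' := hψ.eq_of_mem_image_diag hc
  have wl_ac : wlSetoid X g (i, a, a) (j, c, c) := hE.le_wlSetoid ⟨rfl, rfl, hc⟩
  have hcs : (g j, c) ∈ s :=
    ((coherentOver_wlSetoid X g).base_right_mem_iff (isRelationOf_of_mem hs) wl_ac).1 ha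
  have row_fiber : IsFiber Z' (pointSet s (g j)) := (hX.1 _ Z' hZ' _).2 ⟨s, hs, rfl, b, hb⟩
  have hcb : (b, b) ∈ Z'.basisRel (c, c) := by
    rw [(basisRel_eq_iff (p := (c, c)) row_fiber).2 ⟨rfl, hcs⟩]
    exact ⟨rfl, hb⟩
  exact (wlSetoid X g).trans' wl_ac (hZ'.mem_basisRel_iff_wl.1 hcb)

lemma WLHomogeneous.wl_iff (hX : WLHomogeneous X g) {i : ι} {a b : Ω} :
    wlSetoid X g (i, a, a) (i, b, b) ↔ (g i, b) ∈ X.basisRel (g i, a) := by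
  refine ⟨fun h => ?_, hX (X.basisRel_mem _) (X.mem_basisRel _)⟩
  exact ((coherentOver_wlSetoid X g).base_right_mem_iff
    (isRelationOf_of_mem (X.basisRel_mem _)) h).1 (X.mem_basisRel _)

lemma WLHomogeneous.sesquiclosedCfg (hX : WLHomogeneous X g) (hg : g.Surjective) :
    SesquiclosedCfg X := by
  refine ⟨fun α Z hZ Δ => ?_, IsAlgIso.id X, fun Λ hΛ α hα β hβ => ?_⟩
  · obtain ⟨i, rfl⟩ := hg α
    simp only [isFiber_iff, hZ.mem_basisRel_iff_wl, hX.wl_iff]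
    constructor
    · rintro ⟨a, rfl⟩
      exact ⟨_, X.basisRel_mem _, rfl, a, X.mem_basisRel _⟩
    · rintro ⟨s, hs, rfl, a, ha⟩
      exact ⟨a, by rw [(basisRel_eq_iff hs).2 ha]; rfl⟩
  · obtain ⟨i, rfl⟩ := hg α
    obtain ⟨j, rfl⟩ := hg β
    exact hasExtension_id_of_wl (hX hΛ ⟨rfl, hα⟩ hβ)

end Characterization

section Sections

lemma BackAndForth.restrict {ι A : Type*} {E : ι × A × A → ι × A × A → Prop}
    (hE : BackAndForth E) {T : Set A}
    (hT : ∀ ⦃i j a b a' b'⦄, E (i, a, b) (j, a', b') → (b ∈ T ↔ b' ∈ T)) :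
    BackAndForth fun x y : ι × T × T =>
      E (Prod.map id (Prod.map (↑) (↑)) x) (Prod.map id (Prod.map (↑) (↑)) y) := by
  intro i j a b a' b' h
  obtain ⟨σ, hσ⟩ := hE h
  exact ⟨σ.subtypeEquiv fun c => hT (hσ c).1, fun c => hσ c⟩

lemma BackAndForth.map {ι κ A Q : Type*} [Finite A] {E : ι × A × A → ι × A × A → Prop}
    (hE : BackAndForth E) (ρ : ι → κ) {π : A → Q} (hπ : π.Surjective)
    (ker_iff : ∀ ⦃i j a b a' b'⦄, E (i, a, b) (j, a', b') → (π a = π b ↔ π a' = π b')) :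
    BackAndForth
      (Relation.Map E (Prod.map ρ (Prod.map π π)) (Prod.map ρ (Prod.map π π))) := by
  rintro _ _ _ _ _ _ ⟨⟨i, a, b⟩, ⟨j, a', b'⟩, h, ⟨⟩, ⟨⟩⟩
  obtain ⟨σ, hσ⟩ := hE h
  have ncard_fiber (c : A) : (π ⁻¹' {π c}).ncard = (π ⁻¹' {π (σ c)}).ncard := by
    obtain ⟨τ, hτ⟩ := hE (hσ c).2
    exact ncard_setOf_eq_of_equiv τ fun c' => eq_comm.trans ((ker_iff (hτ c').1).trans eq_comm)
  obtain ⟨τ, hτ⟩ := exists_equiv_of_ncard_fiber_eq hπ hπ σ ncard_fiber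
  refine ⟨τ, fun q => ?_⟩
  obtain ⟨c, rfl, hc⟩ := hτ q
  rw [← hc]
  exact ⟨⟨_, _, (hσ c).1, rfl, rfl⟩, ⟨_, _, (hσ c).2, rfl, rfl⟩⟩

variable {Ω : Type u} {X : CohCfg Ω} {Δ : Set Ω} {e : Set (Ω × Ω)}

/-- The point of the section `Δ/e` represented by `a`. -/
def secMk (e : Set (Ω × Ω)) (a : Δ) : Sec Δ e := ⟨eClass e a, a, a.2, rfl⟩

/-- The relation on pairs of points of `Δ/e`, labelled by points of `Δ/e`, that matches them when
some representatives are matched by `E`. -/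
def secMatch (e : Set (Ω × Ω)) (E : Δ × Ω × Ω → Δ × Ω × Ω → Prop) :
    Sec Δ e × Sec Δ e × Sec Δ e → Sec Δ e × Sec Δ e × Sec Δ e → Prop :=
  Relation.Map
    (fun x y : Δ × Δ × Δ => E (Prod.map id (Prod.map (↑) (↑)) x) (Prod.map id (Prod.map (↑) (↑)) y))
    (Prod.map (secMk e) (Prod.map (secMk e) (secMk e)))
    (Prod.map (secMk e) (Prod.map (secMk e) (secMk e)))

lemma secMk_surjective : (secMk e : Δ → Sec Δ e).Surjective := by
  rintro ⟨_, a, ha, rfl⟩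
  exact ⟨⟨a, ha⟩, rfl⟩

lemma IsParabolic.secMk_eq_iff (he : IsParabolic X e) {a b : Δ} :
    secMk e a = secMk e b ↔ (a.1, b.1) ∈ e := by
  obtain ⟨-, refl, symm, trans⟩ := he
  rw [secMk, secMk, Subtype.mk.injEq]
  constructor
  · intro h
    exact (Set.ext_iff.1 h b).2 (refl b)
  · exact fun hab => Set.ext fun c => ⟨trans _ _ _ (symm _ hab), trans _ _ _ hab⟩

namespace IsSection

lemma exists_mem_iff (hsec : IsSection X Δ e) :
    ∃ d, IsRelationOf X d ∧ e ⊆ d ∧ ∀ a ∈ Δ, ∀ b, b ∈ Δ ↔ (a, b) ∈ d := by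
  obtain ⟨d, ⟨hd, -, symm, trans⟩, hed, c, rfl⟩ := hsec.2
  exact ⟨d, hd, hed, fun a ha b => ⟨trans _ _ _ (symm _ ha), trans _ _ _ ha⟩⟩

lemma mem_secRel_iff (hsec : IsSection X Δ e) {s : Set (Ω × Ω)} {p : Sec Δ e × Sec Δ e} :
    p ∈ secRel Δ e s ↔ ∃ a b : Δ, (a.1, b.1) ∈ s ∧ (secMk e a, secMk e b) = p := by
  obtain ⟨d, -, hed, hΔ⟩ := hsec.exists_mem_iff
  have mem_class {Γ : Sec Δ e} {a : Ω} : a ∈ Γ.1 ↔ ∃ ha : a ∈ Δ, secMk e ⟨a, ha⟩ = Γ := by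
    obtain ⟨c, rfl⟩ := secMk_surjective Γ
    simp only [eq_comm (b := secMk e c), hsec.1.secMk_eq_iff]
    exact ⟨fun hca => ⟨(hΔ c c.2 a).2 (hed hca), hca⟩, fun ⟨_, hca⟩ => hca⟩
  constructor
  · rintro ⟨a, ha, b, hb, hab⟩
    obtain ⟨haΔ, ha⟩ := mem_class.1 ha
    obtain ⟨hbΔ, hb⟩ := mem_class.1 hb
    exact ⟨⟨a, haΔ⟩, ⟨b, hbΔ⟩, hab, Prod.ext ha hb⟩
  · rintro ⟨a, b, hab, rfl⟩
    exact ⟨a, mem_class.2 ⟨a.2, rfl⟩, b, mem_class.2 ⟨b.2, rfl⟩, hab⟩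

variable {Y : CohCfg (Sec Δ e)} {E : Δ × Ω × Ω → Δ × Ω × Ω → Prop}

lemma mem_iff_of_mem_basisRel (hsec : IsSection X Δ e) (hY : IsSectionCfg X Δ e Y)
    {t : Set (Sec Δ e × Sec Δ e)} (ht : t ∈ Y.S) {a b a' b' : Δ}
    (h : (a'.1, b'.1) ∈ X.basisRel (a.1, b.1)) :
    (secMk e a, secMk e b) ∈ t ↔ (secMk e a', secMk e b') ∈ t := by
  have mem : (secMk e a, secMk e b) ∈ secRel Δ e (X.basisRel (a.1, b.1)) :=
    hsec.mem_secRel_iff.2 ⟨a, b, X.mem_basisRel _, rfl⟩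
  have basis : secRel Δ e (X.basisRel (a.1, b.1)) ∈ Y.S := by
    rw [hY]
    exact ⟨_, X.basisRel_mem _, rfl, _, mem⟩
  refine CohCfg.mem_iff_of_mem_basisRel (isRelationOf_of_mem ht) ?_
  rw [(basisRel_eq_iff basis).2 mem]
  exact hsec.mem_secRel_iff.2 ⟨a', b', h, rfl⟩

lemma coherentOver_secMatch (hsec : IsSection X Δ e) (hY : IsSectionCfg X Δ e Y)
    (hE : CoherentOver X ((↑) : Δ → Ω) E) : CoherentOver Y id (secMatch e E) where
  mem_iff := by
    rintro t ht _ _ ⟨⟨i, a, b⟩, ⟨j, a', b'⟩, h, rfl, rfl⟩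
    exact hsec.mem_iff_of_mem_basisRel hY ht
      ((hE.mem_iff (X.basisRel_mem _) h).1 (X.mem_basisRel _))
  base_iff := by
    rintro _ _ ⟨⟨i, a, b⟩, ⟨j, a', b'⟩, h, rfl, rfl⟩
    simp only [Prod.map, id, Prod.mk.injEq, eq_comm (b := secMk e i), eq_comm (b := secMk e j),
      hsec.1.secMk_eq_iff]
    exact and_congr (hE.base_left_mem_iff hsec.1.1 h) (hE.base_right_mem_iff hsec.1.1 h)
  backAndForth := by
    have := X.finite
    obtain ⟨d, hd, -, hΔ⟩ := hsec.exists_mem_iff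
    refine (hE.backAndForth.restrict fun i j a b a' b' h => ?_).map _ secMk_surjective
      fun i j a b a' b' h => ?_
    · rw [hΔ i i.2, hΔ j j.2]
      exact hE.base_right_mem_iff hd h
    · rw [hsec.1.secMk_eq_iff, hsec.1.secMk_eq_iff]
      exact hE.mem_iff_of_isRelationOf hsec.1.1 h

lemma wlHomogeneous (hsec : IsSection X Δ e) (hY : IsSectionCfg X Δ e Y)
    (hX : WLHomogeneous X ((↑) : Δ → Ω)) : WLHomogeneous Y id := by
  intro t ht Γ Γ' Λ Λ' hΛ hΛ'
  rw [hY] at ht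
  obtain ⟨s, hs, rfl, -⟩ := ht
  obtain ⟨a, b, hab, h⟩ := hsec.mem_secRel_iff.1 hΛ
  obtain ⟨a', b', hab', h'⟩ := hsec.mem_secRel_iff.1 hΛ'
  obtain ⟨rfl, rfl⟩ := Prod.mk.inj h
  obtain ⟨rfl, rfl⟩ := Prod.mk.inj h'
  exact (hsec.coherentOver_secMatch hY (coherentOver_wlSetoid X _)).le_wlSetoid
    ⟨(a, b, b), (a', b', b'), hX hs hab hab', rfl, rfl⟩

end IsSection

end Sections

end CohCfg

open CohCfg in
/-- Lemma: a section configuration of a sesquiclosed coherent configuration is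
sesquiclosed. -/
theorem stmt_6 {Ω : Type u} (X : CohCfg Ω) (hX : SesquiclosedCfg X)
    (Δ : Set Ω) (e : Set (Ω × Ω)) (hsec : IsSection X Δ e)
    (Y : CohCfg (Sec Δ e)) (hY : IsSectionCfg X Δ e Y) :
    SesquiclosedCfg Y := by
  have hΔ : WLHomogeneous X ((↑) : Δ → Ω) := hX.wlHomogeneous _
  have hY_id : WLHomogeneous Y id := hsec.wlHomogeneous hY hΔ
  exact hY_id.sesquiclosedCfg Function.surjective_id
end
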